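/- Let δ, μ, ε, τ ∈ ℂ with Re(δ) > 0 and Re(τ) < 1 + min{Re(μ), Re(ε)}. Then for x > 0, the right-sided Saigo fractional integral of the power function satisfies (I₋^{δ,μ,ε} t^{τ−1})(x) = [Γ(μ−τ+1) Γ(ε−τ+1)] / [Γ(1−τ) Γ(δ+μ+ε−τ+1)] · x^{τ−μ−1}. -/

import Mathlib

open MeasureTheory

/-- Pochhammer symbol `(a)_n = a (a+1) ⋯ (a+n−1)`. -/
noncomputable def poch (a : ℂ) (n : ℕ) : ℂ := ∏ i ∈ Finset.range n, (a + i)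

/-- Generalized hypergeometric function `ₚF_q(a₁,…,a_p; c₁,…,c_q; x)`. -/
noncomputable def genHyp (as cs : List ℂ) (x : ℂ) : ℂ :=
  ∑' k : ℕ, ((as.map (fun a => poch a k)).prod / (cs.map (fun c => poch c k)).prod)
    * x ^ k / (Nat.factorial k)

/-- Appell's double hypergeometric function `F₃(a,a′,b,b′;c;x,y)`. -/
noncomputable def appellF3 (a a' b b' c x y : ℂ) : ℂ :=
  ∑' mn : ℕ × ℕ, poch a mn.1 * poch a' mn.2 * poch b mn.1 * poch b' mn.2 /
    (poch c (mn.1 + mn.2) * (Nat.factorial mn.1) * (Nat.factorial mn.2)) * x ^ mn.1 * y ^ mn.2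

/-- Generalized binomial coefficient `binom(a,k) = a(a−1)⋯(a−k+1)/k!`. -/
noncomputable def gbinom (a : ℂ) (k : ℕ) : ℂ := (∏ i ∈ Finset.range k, (a - i)) / (Nat.factorial k)

/-- Jacobi type orthogonal polynomial `M_n^{(p,q)}(x)`. -/
noncomputable def jacobiM (n : ℕ) (p q x : ℂ) : ℂ :=
  (-1) ^ n * (Nat.factorial n) * ∑ k ∈ Finset.range (n + 1),
    gbinom (p - n - 1) k * gbinom (q + n) (n - k) * (-x) ^ k

/-- Left-sided Marichev–Saigo–Maeda fractional integral operator. -/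
noncomputable def msmLeft (δ δ' μ μ' ε : ℂ) (f : ℝ → ℂ) (x : ℝ) : ℂ :=
  (x : ℂ) ^ (-δ) / Complex.Gamma ε *
    ∫ t in Set.Ioo (0 : ℝ) x, ((x - t : ℝ) : ℂ) ^ (ε - 1) * (t : ℂ) ^ (-δ') *
      appellF3 δ δ' μ μ' ε ((1 - t / x : ℝ) : ℂ) ((1 - x / t : ℝ) : ℂ) * f t

/-- Right-sided Marichev–Saigo–Maeda fractional integral operator. -/
noncomputable def msmRight (δ δ' μ μ' ε : ℂ) (f : ℝ → ℂ) (x : ℝ) : ℂ :=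
  (x : ℂ) ^ (-δ') / Complex.Gamma ε *
    ∫ t in Set.Ioi x, ((t - x : ℝ) : ℂ) ^ (ε - 1) * (t : ℂ) ^ (-δ) *
      appellF3 δ δ' μ μ' ε ((1 - t / x : ℝ) : ℂ) ((1 - x / t : ℝ) : ℂ) * f t

/-- Left-sided Saigo fractional integral operator. -/
noncomputable def saigoLeft (δ μ ε : ℂ) (f : ℝ → ℂ) (x : ℝ) : ℂ :=
  (x : ℂ) ^ (-δ - μ) / Complex.Gamma δ *
    ∫ t in Set.Ioo (0 : ℝ) x, ((x - t : ℝ) : ℂ) ^ (δ - 1) *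
      genHyp [δ + μ, -ε] [δ] ((1 - t / x : ℝ) : ℂ) * f t

/-- Right-sided Saigo fractional integral operator. -/
noncomputable def saigoRight (δ μ ε : ℂ) (f : ℝ → ℂ) (x : ℝ) : ℂ :=
  (1 / Complex.Gamma δ) *
    ∫ t in Set.Ioi x, ((t - x : ℝ) : ℂ) ^ (δ - 1) * (t : ℂ) ^ (-δ - μ) *
      genHyp [δ + μ, -ε] [δ] ((1 - x / t : ℝ) : ℂ) * f t

/-- Left-sided Riemann–Liouville fractional integral operator. -/
noncomputable def rlLeft (δ : ℂ) (f : ℝ → ℂ) (x : ℝ) : ℂ :=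
  (1 / Complex.Gamma δ) * ∫ t in Set.Ioo (0 : ℝ) x, ((x - t : ℝ) : ℂ) ^ (δ - 1) * f t

/-- Right-sided Riemann–Liouville fractional integral operator. -/
noncomputable def rlRight (δ : ℂ) (f : ℝ → ℂ) (x : ℝ) : ℂ :=
  (1 / Complex.Gamma δ) * ∫ t in Set.Ioi x, ((t - x : ℝ) : ℂ) ^ (δ - 1) * f t

/-- Left-sided Erdélyi–Kober fractional integral operator `I⁺_{ε,δ}`. -/
noncomputable def ekLeft (ε δ : ℂ) (f : ℝ → ℂ) (x : ℝ) : ℂ :=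
  (x : ℂ) ^ (-δ - ε) / Complex.Gamma δ *
    ∫ t in Set.Ioo (0 : ℝ) x, ((x - t : ℝ) : ℂ) ^ (δ - 1) * (t : ℂ) ^ ε * f t

/-- Right-sided Erdélyi–Kober fractional integral operator `K⁻_{ε,δ}`. -/
noncomputable def ekRight (ε δ : ℂ) (f : ℝ → ℂ) (x : ℝ) : ℂ :=
  (x : ℂ) ^ ε / Complex.Gamma δ *
    ∫ t in Set.Ioi x, ((t - x : ℝ) : ℂ) ^ (δ - 1) * (t : ℂ) ^ (-δ - ε) * f t

/-- Left-sided Marichev–Saigo–Maeda fractional derivative operator. -/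
noncomputable def msmDLeft (δ δ' μ μ' ε : ℂ) (f : ℝ → ℂ) (x : ℝ) : ℂ :=
  iteratedDeriv (⌊ε.re⌋ + 1).toNat
    (msmLeft (-δ') (-δ) (-μ' + ((⌊ε.re⌋ + 1 : ℤ) : ℂ)) (-μ) (-ε + ((⌊ε.re⌋ + 1 : ℤ) : ℂ)) f) x

/-- Right-sided Marichev–Saigo–Maeda fractional derivative operator. -/
noncomputable def msmDRight (δ δ' μ μ' ε : ℂ) (f : ℝ → ℂ) (x : ℝ) : ℂ :=
  (-1 : ℂ) ^ (⌊ε.re⌋ + 1).toNat * iteratedDeriv (⌊ε.re⌋ + 1).toNat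
    (msmRight (-δ') (-δ) (-μ') (-μ + ((⌊ε.re⌋ + 1 : ℤ) : ℂ)) (-ε + ((⌊ε.re⌋ + 1 : ℤ) : ℂ)) f) x

open Filter Topology

lemma poch_succ_eq (a : ℂ) (n : ℕ) (hn : n ≠ 0) :
    poch a (n+1) = (n:ℂ)^a * (Nat.factorial n) * (Complex.GammaSeq a n)⁻¹ := by
  have h1 : (n:ℂ)^a ≠ 0 := by
    rw [Complex.cpow_ne_zero_iff]; left; exact_mod_cast hn
  have h2 : (Nat.factorial n : ℂ) ≠ 0 := by exact_mod_cast Nat.factorial_ne_zero n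
  unfold poch Complex.GammaSeq
  rw [inv_div]
  field_simp

lemma poch_zero (a : ℂ) : poch a 0 = 1 := by simp [poch]

lemma poch_succ (a : ℂ) (n : ℕ) : poch a (n+1) = poch a n * (a + n) := by
  simp [poch, Finset.prod_range_succ]

lemma poch_succ_left (a : ℂ) (n : ℕ) : poch a (n+1) = a * poch (a+1) n := by
  simp only [poch, Finset.prod_range_succ']
  rw [mul_comm]; simp; left
  apply Finset.prod_congr rfl; intros; ring

lemma add_nat_ne_zero (c : ℂ) (hc : 0 < c.re) (n : ℕ) : c + n ≠ 0 := by
  intro h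
  have := congrArg Complex.re h
  simp at this
  have : (0:ℝ) ≤ n := Nat.cast_nonneg n
  linarith

lemma poch_ne_zero (c : ℂ) (hc : 0 < c.re) (n : ℕ) : poch c n ≠ 0 := by
  unfold poch
  exact Finset.prod_ne_zero_iff.2 fun i _ => add_nat_ne_zero c hc i

lemma poch_Gamma (c : ℂ) (hc : 0 < c.re) (n : ℕ) :
    Complex.Gamma (c + n) = poch c n * Complex.Gamma c := by
  induction n with
  | zero => simp [poch_zero]
  | succ n ih =>
    rw [poch_succ]
    push_cast
    rw [← add_assoc, Complex.Gamma_add_one _ (add_nat_ne_zero c hc n), ih]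
    ring

lemma gammaSeq_inv_tendsto (a : ℂ) :
    Tendsto (fun n => (Complex.GammaSeq a n)⁻¹) atTop (𝓝 (Complex.Gamma a)⁻¹) := by
  by_cases h : Complex.Gamma a = 0
  · obtain ⟨m, hm⟩ := (Complex.Gamma_eq_zero_iff a).1 h
    rw [h, inv_zero]
    apply tendsto_const_nhds.congr'
    filter_upwards [eventually_ge_atTop m] with n hn
    unfold Complex.GammaSeq
    rw [Finset.prod_eq_zero (i := m) (by simp; omega) (by rw [hm]; simp)]
    simp
  · exact (Complex.GammaSeq_tendsto_Gamma a).inv₀ h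

lemma poch_bound (a : ℂ) : ∃ C : ℝ, 0 ≤ C ∧ ∀ n : ℕ, n ≠ 0 →
    ‖poch a (n+1)‖ ≤ C * ((n:ℝ)^a.re * (Nat.factorial n)) := by
  obtain ⟨C, hC⟩ := (gammaSeq_inv_tendsto a).norm.bddAbove_range
  have hC' : ∀ n, ‖(Complex.GammaSeq a n)⁻¹‖ ≤ C := fun n => hC ⟨n, rfl⟩
  refine ⟨C, (norm_nonneg _).trans (hC' 0), fun n hn => ?_⟩
  rw [poch_succ_eq a n hn, norm_mul, norm_mul, Complex.norm_natCast_cpow_of_pos (by omega),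
    Complex.norm_natCast, mul_comm C]
  gcongr
  exact hC' n

lemma poch_inv_bound (a : ℂ) : ∃ C : ℝ, 0 ≤ C ∧ ∀ n : ℕ, n ≠ 0 →
    ‖poch a (n+1)‖⁻¹ ≤ C * ((n:ℝ)^a.re * (Nat.factorial n))⁻¹ := by
  obtain ⟨C, hC⟩ := (Complex.GammaSeq_tendsto_Gamma a).norm.bddAbove_range
  have hC' : ∀ n, ‖Complex.GammaSeq a n‖ ≤ C := fun n => hC ⟨n, rfl⟩
  refine ⟨C, (norm_nonneg _).trans (hC' 0), fun n hn => ?_⟩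
  rw [poch_succ_eq a n hn, norm_mul, norm_mul, Complex.norm_natCast_cpow_of_pos (by omega),
    Complex.norm_natCast, mul_inv, norm_inv, inv_inv, mul_comm C]
  gcongr
  exact hC' n

lemma gauss_term_bound (a b c : ℂ) : ∃ C : ℝ, 0 ≤ C ∧ ∀ n : ℕ, n ≠ 0 →
    ‖poch a (n+1) * poch b (n+1) / (poch c (n+1) * (Nat.factorial (n+1)))‖ ≤
      C * ((n:ℝ)^(a+b-c).re / (n+1)) := by
  obtain ⟨A, hA, hA'⟩ := poch_bound a
  obtain ⟨B, hB, hB'⟩ := poch_bound b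
  obtain ⟨D, hD, hD'⟩ := poch_inv_bound c
  refine ⟨A*B*D, by positivity, fun n hn => ?_⟩
  have hn' : (0:ℝ) < n := by exact_mod_cast Nat.pos_of_ne_zero hn
  rw [norm_div, norm_mul, norm_mul, Complex.norm_natCast, div_eq_mul_inv, mul_inv]
  calc _ ≤ (A * ((n:ℝ)^a.re * (Nat.factorial n))) * (B * ((n:ℝ)^b.re * (Nat.factorial n)))
      * ((D * ((n:ℝ)^c.re * (Nat.factorial n))⁻¹) * ((Nat.factorial (n+1) : ℝ))⁻¹) := by
        gcongr
        exacts [hA' n hn, hB' n hn, hD' n hn]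
    _ = _ := by
        rw [Complex.sub_re, Complex.add_re, Real.rpow_sub hn', Real.rpow_add hn',
          Nat.factorial_succ]
        have : (n.factorial : ℝ) ≠ 0 := by exact_mod_cast Nat.factorial_ne_zero n
        have : (n:ℝ)^c.re ≠ 0 := (Real.rpow_pos_of_pos hn' _).ne'
        push_cast
        field_simp

lemma rpow_div_summable (r : ℝ) (hr : r < 0) : Summable fun n : ℕ => (n:ℝ)^r / (n+1) := by
  have h := (Real.summable_nat_rpow (p := r - 1)).2 (by linarith)
  rw [← summable_nat_add_iff 1] at h ⊢
  refine h.of_nonneg_of_le (fun n => by positivity) fun n => ?_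
  have : (0:ℝ) < ((n+1 : ℕ):ℝ) := by positivity
  rw [Real.rpow_sub_one this.ne']
  gcongr
  linarith

noncomputable def gaussTerm (a b c : ℂ) (n : ℕ) : ℂ :=
  poch a n * poch b n / (poch c n * (Nat.factorial n))

lemma gauss_summable (a b c : ℂ) (h : 0 < (c-a-b).re) :
    Summable fun n => ‖gaussTerm a b c n‖ := by
  obtain ⟨C, hC, hb⟩ := gauss_term_bound a b c
  have hs := (rpow_div_summable (a+b-c).re (by simp at h ⊢; linarith)).mul_left C
  rw [← summable_nat_add_iff 1] at hs
  rw [← summable_nat_add_iff 2]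
  exact hs.of_nonneg_of_le (fun n => norm_nonneg _) fun n => hb (n+1) (by omega)

lemma gauss_mul_tendsto (a b c : ℂ) (h : 0 < (c-a-b).re) :
    Tendsto (fun n : ℕ => (n:ℂ) * gaussTerm a b c n) atTop (𝓝 0) := by
  obtain ⟨C, hC, hb⟩ := gauss_term_bound a b c
  rw [← tendsto_add_atTop_iff_nat 1]
  have hz : Tendsto (fun n : ℕ => C * (n:ℝ)^(a+b-c).re) atTop (𝓝 0) := by
    have := (tendsto_rpow_neg_atTop h).comp tendsto_natCast_atTop_atTop
    have := this.const_mul C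
    rw [mul_zero] at this
    refine this.congr fun n => ?_
    simp only [Function.comp]
    congr 2; simp; ring
  refine squeeze_zero_norm' ?_ hz
  filter_upwards [eventually_ne_atTop 0] with n hn
  rw [norm_mul, Complex.norm_natCast]
  calc _ ≤ ((n+1:ℕ):ℝ) * (C * ((n:ℝ)^(a+b-c).re / (n+1))) := by
        gcongr
        exact hb n hn
    _ = _ := by push_cast; field_simp

lemma gauss_contig (a b c : ℂ) (hc : 0 < c.re) (h : 0 < (c-a-b).re) :
    (c-a-b) * c * ∑' n, gaussTerm a b c n = (c-a)*(c-b) * ∑' n, gaussTerm a b (c+1) n := by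
  have hs := (gauss_summable a b c h).of_norm
  have hs' := (gauss_summable a b (c+1) (by simp at h ⊢; linarith)).of_norm
  have key : ∀ n : ℕ, (c-a-b) * c * gaussTerm a b c n - (c-a)*(c-b) * gaussTerm a b (c+1) n
      = -c * (((n+1:ℕ):ℂ) * gaussTerm a b c (n+1) - (n:ℂ) * gaussTerm a b c n) := by
    intro n
    have h1 : poch (c+1) n = poch c n * (c+n) / c := by
      have hc0 : c ≠ 0 := by simpa using add_nat_ne_zero c hc 0
      rw [← poch_succ, poch_succ_left]; field_simp
    have h2 := poch_ne_zero c hc n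
    have h3 := add_nat_ne_zero c hc n
    have hc0 : c ≠ 0 := by simpa using add_nat_ne_zero c hc 0
    have h4 : (n.factorial : ℂ) ≠ 0 := by exact_mod_cast Nat.factorial_ne_zero n
    have h5 : (n:ℂ) + 1 ≠ 0 := by exact_mod_cast Nat.succ_ne_zero n
    unfold gaussTerm
    rw [h1, poch_succ, poch_succ, poch_succ, Nat.factorial_succ]
    push_cast
    field_simp
    ring
  have e1 : HasSum (fun n => (c-a-b) * c * gaussTerm a b c n - (c-a)*(c-b) * gaussTerm a b (c+1) n)
      ((c-a-b) * c * (∑' n, gaussTerm a b c n) - (c-a)*(c-b) * ∑' n, gaussTerm a b (c+1) n) :=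
    (hs.hasSum.mul_left _).sub (hs'.hasSum.mul_left _)
  have e2 := e1.tendsto_sum_nat
  have e3 : Tendsto (fun N : ℕ => -c * ((N:ℂ) * gaussTerm a b c N)) atTop (𝓝 0) := by
    simpa using (gauss_mul_tendsto a b c h).const_mul (-c)
  have e4 : ∀ N : ℕ, ∑ n ∈ Finset.range N, ((c-a-b) * c * gaussTerm a b c n - (c-a)*(c-b) * gaussTerm a b (c+1) n) = -c * ((N:ℂ) * gaussTerm a b c N) := by
    intro N
    rw [Finset.sum_congr rfl fun n _ => key n, ← Finset.mul_sum,
      Finset.sum_range_sub (fun n : ℕ => (n:ℂ) * gaussTerm a b c n)]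
    simp
  simp only [e4] at e2
  exact sub_eq_zero.1 (tendsto_nhds_unique e2 e3)

lemma gauss_iter (a b c : ℂ) (hc : 0 < c.re) (h : 0 < (c-a-b).re) (m : ℕ) :
    ∑' n, gaussTerm a b c n = poch (c-a) m * poch (c-b) m / (poch c m * poch (c-a-b) m) *
      ∑' n, gaussTerm a b (c+m) n := by
  induction m with
  | zero => simp [poch_zero]
  | succ m ih =>
    have hm : (0:ℝ) ≤ m := Nat.cast_nonneg m
    have hk := gauss_contig a b (c+m) (by simp; linarith) (by simp at h ⊢; linarith)
    rw [ih]
    have h1 := poch_ne_zero c hc m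
    have h2 := poch_ne_zero _ h m
    have h3 := add_nat_ne_zero c hc m
    have h4 := add_nat_ne_zero _ h m
    simp only [poch_succ]
    push_cast
    rw [← add_assoc]
    rw [show c + m - a - b = c - a - b + m by ring, show c + m - a = c - a + m by ring,
      show c + m - b = c - b + m by ring] at hk
    have hk' : ∑' n, gaussTerm a b (c+m) n = (c - a + m) * (c - b + m) *
        (∑' n, gaussTerm a b (c+m+1) n) / ((c-a-b+m)*(c+m)) := by
      rw [eq_div_iff (mul_ne_zero h4 h3), ← hk]; ring
    rw [hk']
    field_simp

lemma norm_add_nat_mono (c : ℂ) (hc : 0 < c.re) (m : ℕ) : ‖c‖ ≤ ‖c + m‖ := by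
  have hm : (0:ℝ) ≤ m := Nat.cast_nonneg m
  rw [Complex.norm_def, Complex.norm_def]
  apply Real.sqrt_le_sqrt
  simp only [Complex.normSq_apply, Complex.add_re, Complex.add_im, Complex.natCast_re,
    Complex.natCast_im, add_zero]
  nlinarith

lemma gauss_limit (a b c : ℂ) (hc : 0 < c.re) (h : 0 < (c-a-b).re) :
    Tendsto (fun m : ℕ => ∑' n, gaussTerm a b (c+m) n) atTop (𝓝 1) := by
  have : (1:ℂ) = ∑' n : ℕ, if n = 0 then (1:ℂ) else 0 := by simp
  rw [this]
  refine tendsto_tsum_of_dominated_convergence (gauss_summable a b c h) ?_ ?_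
  · intro n
    rcases n with _ | n
    · simp [gaussTerm, poch_zero]
    · simp only [Nat.succ_ne_zero, if_false]
      have h1 : Tendsto (fun m : ℕ => ‖poch (c+m) (n+1)‖) atTop atTop := by
        have hb : Tendsto (fun m : ℕ => ‖c + m‖) atTop atTop := by
          refine tendsto_atTop_mono (f := fun m : ℕ => (m:ℝ)) (fun m => ?_)
            tendsto_natCast_atTop_atTop
          refine le_trans ?_ (Complex.re_le_norm _)
          simp; exact hc.le
        have hk : ∀ m : ℕ, ‖c + m‖ * ‖poch (c+1) n‖ ≤ ‖poch (c+m) (n+1)‖ := by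
          intro m
          rw [poch_succ_left, norm_mul]
          gcongr
          unfold poch
          rw [norm_prod, norm_prod]
          refine Finset.prod_le_prod (fun _ _ => norm_nonneg _) fun i _ => ?_
          have hi : (0:ℝ) ≤ i := Nat.cast_nonneg i
          have := norm_add_nat_mono (c+1+i) (by simp; linarith) m
          rwa [show c + m + 1 + i = c + 1 + i + m by ring]
        refine tendsto_atTop_mono hk (hb.atTop_mul_const ?_)
        exact norm_pos_iff.2 (poch_ne_zero _ (by simp; linarith) n)
      have h2 : Tendsto (fun m : ℕ => (poch (c+m) (n+1))⁻¹) atTop (𝓝 0) := by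
        rw [tendsto_zero_iff_norm_tendsto_zero]
        simp only [norm_inv]
        exact h1.inv_tendsto_atTop
      have h3 := h2.const_mul (poch a (n+1) * poch b (n+1) / (Nat.factorial (n+1)))
      rw [mul_zero] at h3
      refine h3.congr fun m => ?_
      unfold gaussTerm
      rw [div_mul_eq_div_div_swap]
      rfl
  · refine Eventually.of_forall fun m n => ?_
    unfold gaussTerm
    rw [norm_div, norm_div, norm_mul (poch (c+m) n), norm_mul (poch c n)]
    have hp : 0 < ‖poch c n‖ := norm_pos_iff.2 (poch_ne_zero c hc n)
    have hf : 0 < ‖(n.factorial : ℂ)‖ := norm_pos_iff.2 (by exact_mod_cast Nat.factorial_ne_zero n)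
    gcongr
    unfold poch
    rw [norm_prod, norm_prod]
    refine Finset.prod_le_prod (fun _ _ => norm_nonneg _) fun i _ => ?_
    have hi : (0:ℝ) ≤ i := Nat.cast_nonneg i
    have := norm_add_nat_mono (c+i) (by simp; linarith) m
    rwa [show c + m + i = c + i + m by ring]

lemma gauss_sum (a b c : ℂ) (hc : 0 < c.re) (h : 0 < (c-a-b).re) :
    ∑' n, gaussTerm a b c n = Complex.Gamma c * Complex.Gamma (c-a-b) /
      (Complex.Gamma (c-a) * Complex.Gamma (c-b)) := by
  have h1 : Tendsto (fun m : ℕ => poch (c-a) m * poch (c-b) m / (poch c m * poch (c-a-b) m))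
      atTop (𝓝 (Complex.Gamma c * Complex.Gamma (c-a-b) /
      (Complex.Gamma (c-a) * Complex.Gamma (c-b)))) := by
    rw [← tendsto_add_atTop_iff_nat 1]
    have := ((Complex.GammaSeq_tendsto_Gamma c).mul (Complex.GammaSeq_tendsto_Gamma (c-a-b))).mul
      ((gammaSeq_inv_tendsto (c-a)).mul (gammaSeq_inv_tendsto (c-b)))
    rw [div_eq_mul_inv, mul_inv]
    refine this.congr' ?_
    filter_upwards [eventually_ne_atTop 0] with n hn
    rw [poch_succ_eq _ _ hn, poch_succ_eq _ _ hn, poch_succ_eq _ _ hn, poch_succ_eq _ _ hn]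
    have hn' : (n:ℂ) ≠ 0 := by exact_mod_cast hn
    have h4 : (n.factorial : ℂ) ≠ 0 := by exact_mod_cast Nat.factorial_ne_zero n
    have e : (n:ℂ)^(c-a) * (n:ℂ)^(c-b) = (n:ℂ)^c * (n:ℂ)^(c-a-b) := by
      rw [← Complex.cpow_add _ _ hn', ← Complex.cpow_add _ _ hn']; congr 1; ring
    have h5 : (n:ℂ)^c ≠ 0 := by rw [Complex.cpow_ne_zero_iff]; left; exact hn'
    have h6 : (n:ℂ)^(c-a-b) ≠ 0 := by rw [Complex.cpow_ne_zero_iff]; left; exact hn'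
    calc _ = ((n:ℂ)^c * (n:ℂ)^(c-a-b)) / ((n:ℂ)^c * (n:ℂ)^(c-a-b)) *
        ((n.factorial : ℂ)^2/(n.factorial : ℂ)^2) * (Complex.GammaSeq c n * Complex.GammaSeq (c-a-b) n *
          ((Complex.GammaSeq (c-a) n)⁻¹ * (Complex.GammaSeq (c-b) n)⁻¹)) := by
            rw [div_self (mul_ne_zero h5 h6), div_self (pow_ne_zero 2 h4)]; ring
      _ = _ := by
        nth_rewrite 1 [← e]
        simp only [div_eq_mul_inv, mul_inv, inv_inv]
        ring
  have h2 := h1.mul (gauss_limit a b c hc h)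
  rw [mul_one] at h2
  refine tendsto_nhds_unique ?_ h2
  refine tendsto_const_nhds.congr fun m => gauss_iter a b c hc h m

lemma beta_Ioo (u v : ℂ) : ∫ y in Set.Ioo (0:ℝ) 1, (y:ℂ)^(u-1) * (1 - (y:ℂ))^(v-1) =
    Complex.betaIntegral u v := by
  unfold Complex.betaIntegral
  rw [intervalIntegral.integral_of_le zero_le_one, integral_Ioc_eq_integral_Ioo]

lemma beta_Ioo_integrable (u v : ℂ) (hu : 0 < u.re) (hv : 0 < v.re) :
    IntegrableOn (fun y : ℝ => (y:ℂ)^(u-1) * (1 - (y:ℂ))^(v-1)) (Set.Ioo (0:ℝ) 1) := by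
  have := Complex.betaIntegral_convergent hu hv
  rw [intervalIntegrable_iff_integrableOn_Ioo_of_le zero_le_one] at this
  exact this

lemma beta_norm (u v : ℂ) :
    ((∫ y in Set.Ioo (0:ℝ) 1, ‖(y:ℂ)^(u-1) * (1 - (y:ℂ))^(v-1)‖ : ℝ) : ℂ) =
    Complex.betaIntegral (u.re:ℂ) (v.re:ℂ) := by
  rw [← beta_Ioo, ← integral_complex_ofReal]
  refine setIntegral_congr_fun measurableSet_Ioo fun y hy => ?_
  have h1 : 0 < y := hy.1
  have h2 : 0 < 1 - y := by linarith [hy.2]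
  have e : (1 - (y:ℂ)) = ((1 - y : ℝ) : ℂ) := by push_cast; rfl
  rw [e, norm_mul, Complex.norm_cpow_eq_rpow_re_of_pos h1, Complex.norm_cpow_eq_rpow_re_of_pos h2]
  push_cast
  rw [Complex.ofReal_cpow h1.le, Complex.ofReal_cpow h2.le]
  simp

lemma beta_poch (u v : ℂ) (hu : 0 < u.re) (hv : 0 < v.re) (n : ℕ) :
    Complex.betaIntegral (u + n) v = Complex.Gamma u * Complex.Gamma v / Complex.Gamma (u+v) *
      (poch u n / poch (u+v) n) := by
  have hn : (0:ℝ) ≤ n := Nat.cast_nonneg n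
  rw [Complex.betaIntegral_eq_Gamma_mul_div _ _ (by simp; linarith) hv, poch_Gamma u hu,
    show u + n + v = u + v + n by ring, poch_Gamma (u+v) (by simp; linarith)]
  simp only [div_eq_mul_inv, mul_inv]
  ring

lemma main_summable (a b δ s : ℂ) (hδ : 0 < δ.re) (hs : 0 < s.re) (h : 0 < (δ+s-a-b).re) :
    Summable fun n : ℕ => ‖gaussTerm a b δ n‖ * ‖Complex.betaIntegral ((δ.re:ℂ) + n) (s.re : ℂ)‖ := by
  obtain ⟨C, hC, hb⟩ := gauss_term_bound a b δ
  obtain ⟨A, hA, hA'⟩ := poch_bound (δ.re : ℂ)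
  obtain ⟨D, hD, hD'⟩ := poch_inv_bound ((δ.re : ℂ) + (s.re : ℂ))
  set K := ‖Complex.Gamma (δ.re:ℂ) * Complex.Gamma (s.re:ℂ) / Complex.Gamma ((δ.re:ℂ)+(s.re:ℂ))‖ with hK
  have hK0 : 0 ≤ K := norm_nonneg _
  have hS := (rpow_div_summable (a+b-δ-s).re (by simp at h ⊢; linarith)).mul_left (C*K*A*D)
  rw [← summable_nat_add_iff 1] at hS
  rw [← summable_nat_add_iff 2]
  refine hS.of_nonneg_of_le (fun n => by positivity) fun m => ?_
  have hn : m + 1 ≠ 0 := by omega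
  generalize hmn : m + 1 = n at *
  rw [show m + 2 = n + 1 by omega, beta_poch _ _ (by simpa) (by simpa), norm_mul, ← hK, norm_div,
    div_eq_mul_inv]
  have hn' : (0:ℝ) < n := by exact_mod_cast Nat.pos_of_ne_zero hn
  calc _ ≤ (C * ((n:ℝ)^(a+b-δ).re / (n+1))) * (K * ((A * ((n:ℝ)^((δ.re : ℂ)).re * (Nat.factorial n))) *
        (D * ((n:ℝ)^((δ.re : ℂ) + (s.re : ℂ)).re * (Nat.factorial n))⁻¹))) := by
        gcongr
        exacts [hb n hn, hA' n hn, hD' n hn]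
    _ = _ := by
        rw [Complex.sub_re (a+b-δ) s, Real.rpow_sub hn', Complex.add_re (δ.re : ℂ), Real.rpow_add hn']
        simp only [Complex.ofReal_re]
        have : (n.factorial : ℝ) ≠ 0 := by exact_mod_cast Nat.factorial_ne_zero n
        have : (n:ℝ)^δ.re ≠ 0 := (Real.rpow_pos_of_pos hn' _).ne'
        have : (n:ℝ)^s.re ≠ 0 := (Real.rpow_pos_of_pos hn' _).ne'
        field_simp

lemma main_integral (a b δ s : ℂ) (hδ : 0 < δ.re) (hs : 0 < s.re) (h : 0 < (δ+s-a-b).re) :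
    ∫ y in Set.Ioo (0:ℝ) 1, (y:ℂ)^(δ-1) * (1 - (y:ℂ))^(s-1) * genHyp [a, b] [δ] (y:ℂ) =
      Complex.Gamma δ * (Complex.Gamma s * Complex.Gamma (δ+s-a-b) /
        (Complex.Gamma (δ+s-a) * Complex.Gamma (δ+s-b))) := by
  set F : ℕ → ℝ → ℂ := fun n y =>
    gaussTerm a b δ n * ((y:ℂ)^(δ+n-1) * (1 - (y:ℂ))^(s-1)) with hF
  have hre : ∀ n : ℕ, 0 < (δ + n).re := fun n => by
    have hn : (0:ℝ) ≤ n := Nat.cast_nonneg n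
    simp; linarith
  have hint : ∀ n, Integrable (F n) (volume.restrict (Set.Ioo (0:ℝ) 1)) := fun n =>
    (beta_Ioo_integrable (δ+n) s (hre n) hs).const_mul _
  have hsum : Summable fun n => ∫ y in Set.Ioo (0:ℝ) 1, ‖F n y‖ := by
    refine (main_summable a b δ s hδ hs h).congr fun n => ?_
    simp only [hF]
    simp_rw [norm_mul (gaussTerm a b δ n)]
    rw [integral_const_mul]
    congr 1
    have := beta_norm (δ+n) s
    simp only [Complex.add_re, Complex.natCast_re, Complex.ofReal_add, Complex.ofReal_natCast] at this
    rw [← this, Complex.norm_real, Real.norm_of_nonneg]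
    exact integral_nonneg fun _ => norm_nonneg _
  have key := (hasSum_integral_of_summable_integral_norm hint hsum).tsum_eq
  have e1 : ∫ y in Set.Ioo (0:ℝ) 1, (y:ℂ)^(δ-1) * (1 - (y:ℂ))^(s-1) * genHyp [a, b] [δ] (y:ℂ) =
      ∫ y in Set.Ioo (0:ℝ) 1, ∑' n, F n y := by
    refine setIntegral_congr_fun measurableSet_Ioo fun y hy => ?_
    simp only [genHyp]
    rw [← tsum_mul_left]
    refine tsum_congr fun n => ?_
    have hy0 : (y:ℂ) ≠ 0 := by exact_mod_cast hy.1.ne'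
    simp only [hF, gaussTerm, List.map_cons, List.map_nil, List.prod_cons, List.prod_nil, mul_one]
    rw [show δ + n - 1 = (δ - 1) + n by ring, Complex.cpow_add _ _ hy0, Complex.cpow_natCast]
    simp only [div_eq_mul_inv, mul_inv]
    ring
  rw [e1, ← key]
  have hcs : 0 < (δ + s).re := by simp; linarith
  have hg0 : Complex.Gamma (δ+s) ≠ 0 := Complex.Gamma_ne_zero_of_re_pos hcs
  have e2 : ∀ n, ∫ y in Set.Ioo (0:ℝ) 1, F n y =
      (Complex.Gamma δ * Complex.Gamma s / Complex.Gamma (δ+s)) * gaussTerm a b (δ+s) n := by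
    intro n
    simp only [hF]
    rw [integral_const_mul, beta_Ioo, beta_poch δ s hδ hs]
    unfold gaussTerm
    have h1 := poch_ne_zero δ hδ n
    have h2 := poch_ne_zero (δ+s) hcs n
    have h4 : (n.factorial : ℂ) ≠ 0 := by exact_mod_cast Nat.factorial_ne_zero n
    field_simp
  rw [tsum_congr e2, tsum_mul_left, gauss_sum a b (δ+s) hcs h]
  simp only [div_eq_mul_inv, mul_inv]
  field_simp

lemma image_map (x : ℝ) (hx : 0 < x) : (fun v : ℝ => x / (1 - v)) '' Set.Ioo 0 1 = Set.Ioi x := by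
  ext t
  simp only [Set.mem_image, Set.mem_Ioo, Set.mem_Ioi]
  constructor
  · rintro ⟨v, ⟨h0, h1⟩, rfl⟩
    rw [lt_div_iff₀ (by linarith)]
    nlinarith
  · intro ht
    have ht0 : 0 < t := hx.trans ht
    refine ⟨1 - x / t, ⟨?_, ?_⟩, ?_⟩
    · rw [sub_pos, div_lt_one ht0]; exact ht
    · have := div_pos hx ht0
      linarith
    · field_simp
      simp [hx.ne']

lemma saigo_subst (x : ℝ) (hx : 0 < x) (g : ℝ → ℂ) :
    ∫ t in Set.Ioi x, g t =
      ∫ v in Set.Ioo (0:ℝ) 1, ((x / (1-v)^2 : ℝ) : ℂ) * g (x / (1-v)) := by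
  rw [← image_map x hx, integral_image_eq_integral_abs_deriv_smul (f' := fun v => x / (1-v)^2)
    measurableSet_Ioo]
  · refine setIntegral_congr_fun measurableSet_Ioo fun v _ => ?_
    rw [abs_of_nonneg (by positivity), Complex.real_smul]
  · intro v hv
    have h1 : (1 - v) ≠ 0 := by linarith [hv.2]
    have := ((hasDerivAt_const v x).div ((hasDerivAt_id v).const_sub 1) h1)
    refine HasDerivAt.hasDerivWithinAt ?_
    convert! this using 1
    simp
  · intro v hv w hw hvw
    have h1 : (1 - v) ≠ 0 := by linarith [hv.2]
    have h2 : (1 - w) ≠ 0 := by linarith [hw.2]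
    simp only [] at hvw
    rw [div_eq_div_iff h1 h2] at hvw
    have := mul_left_cancel₀ hx.ne' hvw
    linarith

/-- Saigo right-sided fractional integral of a power function (Lemma 4). -/
theorem saigoRight_power (δ μ ε τ : ℂ) (hδ : 0 < δ.re)
    (hτ : τ.re < 1 + min μ.re ε.re) (x : ℝ) (hx : 0 < x) :
    saigoRight δ μ ε (fun t => (t : ℂ) ^ (τ - 1)) x =
      Complex.Gamma (μ - τ + 1) * Complex.Gamma (ε - τ + 1) /
        (Complex.Gamma (1 - τ) * Complex.Gamma (δ + μ + ε - τ + 1)) *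
        (x : ℂ) ^ (τ - μ - 1) := by
  have hτ1 : τ.re < 1 + μ.re := hτ.trans_le (by gcongr; exact min_le_left _ _)
  have hτ2 : τ.re < 1 + ε.re := hτ.trans_le (by gcongr; exact min_le_right _ _)
  unfold saigoRight
  rw [saigo_subst x hx]
  have hG : Complex.Gamma δ ≠ 0 := Complex.Gamma_ne_zero_of_re_pos hδ
  have hM := main_integral (δ + μ) (-ε) δ (μ - τ + 1) hδ (by simp; linarith) (by simp; linarith)
  have e : ∫ v in Set.Ioo (0:ℝ) 1, ((x / (1-v)^2 : ℝ) : ℂ) *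
      (((x / (1-v) - x : ℝ) : ℂ) ^ (δ - 1) * ((x / (1-v) : ℝ) : ℂ) ^ (-δ - μ) *
      genHyp [δ + μ, -ε] [δ] ((1 - x / (x / (1-v)) : ℝ) : ℂ) * ((x / (1-v) : ℝ) : ℂ) ^ (τ - 1)) =
      ∫ v in Set.Ioo (0:ℝ) 1, (x:ℂ)^(τ - μ - 1) * ((v:ℂ)^(δ-1) * (1 - (v:ℂ))^(μ - τ + 1 - 1) *
        genHyp [δ + μ, -ε] [δ] (v:ℂ)) := by
    refine setIntegral_congr_fun measurableSet_Ioo fun v hv => ?_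
    have h0 : 0 < v := hv.1
    have h1 : 0 < 1 - v := by linarith [hv.2]
    have e1 : 1 - x / (x / (1-v)) = v := by field_simp; ring
    have e2 : x / (1-v) - x = x * v * (1-v)⁻¹ := by field_simp; ring
    have cp : ∀ (y : ℝ) (z : ℂ), 0 < y → (y:ℂ)^z = Complex.exp (Real.log y * z) := by
      intro y z hy
      rw [Complex.cpow_def_of_ne_zero (by exact_mod_cast hy.ne'), Complex.ofReal_log hy.le]
    have e3 : ((x / (1-v)^2 : ℝ) : ℂ) = Complex.exp (Real.log x - 2 * Real.log (1-v)) := by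
      rw [← Real.exp_log (show 0 < x / (1-v)^2 by positivity),
        Real.log_div hx.ne' (by positivity), Real.log_pow]
      push_cast; rfl
    have e4 : (1 - (v:ℂ)) = ((1 - v : ℝ) : ℂ) := by push_cast; rfl
    rw [e1, e2, e3, e4, cp _ _ (show 0 < x * v * (1-v)⁻¹ by positivity),
      cp _ _ (show 0 < x / (1-v) by positivity), cp _ _ (show 0 < x / (1-v) by positivity),
      cp _ _ hx, cp _ _ h0, cp _ _ h1, Real.log_mul (by positivity) (by positivity),
      Real.log_mul hx.ne' h0.ne', Real.log_inv, Real.log_div hx.ne' h1.ne']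
    generalize genHyp [δ + μ, -ε] [δ] (v:ℂ) = G
    generalize Real.log x = X
    generalize Real.log v = V
    generalize Real.log (1-v) = W
    have r : ∀ A B C D E : ℂ, A * (B * C * D * E) = (A * B * C * E) * D := by intros; ring
    have r' : ∀ A B C D : ℂ, A * (B * C * D) = (A * B * C) * D := by intros; ring
    rw [r, r', ← Complex.exp_add, ← Complex.exp_add, ← Complex.exp_add, ← Complex.exp_add,
      ← Complex.exp_add]
    congr 2
    push_cast
    ring
  rw [e, integral_const_mul, hM, show δ + (μ - τ + 1) - (δ + μ) - -ε = ε - τ + 1 by ring,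
    show δ + (μ - τ + 1) - (δ + μ) = 1 - τ by ring,
    show δ + (μ - τ + 1) - -ε = δ + μ + ε - τ + 1 by ring]
  field_simp
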